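/- Let 𝒜 be a C*-category. Then the supremum of all C*-seminorms on the *-algebra C*₀𝒜 is finite: for every C*-seminorm ρ on C*₀𝒜 and every element a = Σ_{x,y} a_{xy} with a_{xy} ∈ 𝒜(x,y), one has ρ(a) ≤ Σ_{x,y} ρ(a_{xy}) = Σ_{x,y} ρ(a_{xy}* a_{xy})^{1/2} ≤ Σ_{x,y} ‖a_{xy}* a_{xy}‖^{1/2}, using that each C*-algebra 𝒜(x,x) has a unique C*-norm. Hence the enveloping C*-algebra C*𝒜 is well defined. -/

import Mathlib

/-!
Let `h` be a self-adjoint element of a C*-algebra. In the unitization it is the multiple by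
`‖h‖ / 2` of the sum of a unitary `u` and its adjoint. The C*-identity alone makes every seminorm
`p` satisfying it invariant under left multiplication by `u` and `u*`, since `(u b)* (u b) = b* b`;
hence `p (h b) ≤ ‖h‖ p b`. For `b = h` this reads `p h ^ 2 ≤ ‖h‖ p h`, so `p ≤ ‖·‖` on self-adjoint
elements, and by the C*-identity everywhere. In a C*-category, `f* f` lies in the C*-algebra of
endomorphisms of the source of `f`, so this bounds `p` on each morphism, and the triangle
inequality does the rest.
-/

universe u v

/-- A (possibly nonunital) C*-category: a small category whose morphism sets are complex
Banach spaces equipped with conjugate-linear involutions `* : 𝒜(x,y) → 𝒜(y,x)` satisfying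
`(a*)* = a`, `‖ab‖ ≤ ‖a‖ ‖b‖`, `‖a* a‖ = ‖a‖²`, `(ab)* = b* a*` and `a* a ≥ 0` (the last
axiom expressed by `a* a` being of the form `b* b` for an endomorphism `b`).  Identity
morphisms are not required. -/
structure CStarCategory where
  Obj : Type u
  Hom : Obj → Obj → Type v
  [nacg : ∀ x y, NormedAddCommGroup (Hom x y)]
  [nsp : ∀ x y, NormedSpace ℂ (Hom x y)]
  [complete : ∀ x y, CompleteSpace (Hom x y)]
  /-- composition: `comp g f = g ∘ f` -/
  comp : ∀ {x y z : Obj}, Hom y z → Hom x y → Hom x z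
  /-- the involution -/
  star : ∀ {x y : Obj}, Hom x y → Hom y x
  comp_assoc : ∀ {w x y z : Obj} (h : Hom y z) (g : Hom x y) (f : Hom w x),
    comp (comp h g) f = comp h (comp g f)
  add_comp : ∀ {x y z : Obj} (g g' : Hom y z) (f : Hom x y),
    comp (g + g') f = comp g f + comp g' f
  comp_add : ∀ {x y z : Obj} (g : Hom y z) (f f' : Hom x y),
    comp g (f + f') = comp g f + comp g f'
  smul_comp : ∀ {x y z : Obj} (c : ℂ) (g : Hom y z) (f : Hom x y),
    comp (c • g) f = c • comp g f
  comp_smul : ∀ {x y z : Obj} (c : ℂ) (g : Hom y z) (f : Hom x y),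
    comp g (c • f) = c • comp g f
  star_add : ∀ {x y : Obj} (f g : Hom x y), star (f + g) = star f + star g
  star_smul : ∀ {x y : Obj} (c : ℂ) (f : Hom x y),
    star (c • f) = (starRingEnd ℂ c) • star f
  star_star : ∀ {x y : Obj} (f : Hom x y), star (star f) = f
  star_comp : ∀ {x y z : Obj} (g : Hom y z) (f : Hom x y),
    star (comp g f) = comp (star f) (star g)
  norm_comp_le : ∀ {x y z : Obj} (g : Hom y z) (f : Hom x y), ‖comp g f‖ ≤ ‖g‖ * ‖f‖
  norm_star_comp_self : ∀ {x y : Obj} (f : Hom x y), ‖comp (star f) f‖ = ‖f‖ ^ 2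
  star_comp_self_nonneg : ∀ {x y : Obj} (f : Hom x y),
    ∃ b : Hom x x, comp (star f) f = comp (star b) b

namespace CStarCategory

attribute [instance] CStarCategory.nacg CStarCategory.nsp CStarCategory.complete

variable (𝒜 : CStarCategory)

/-- The underlying vector space of the *-algebra `C*₀𝒜 = ⊕_{x,y} 𝒜(x,y)`, as finitely
supported dependent functions. -/
abbrev C0 : Type _ := Π₀ p : 𝒜.Obj × 𝒜.Obj, 𝒜.Hom p.1 p.2

open scoped Classical in
/-- The product of the *-algebra `C*₀𝒜`: for `f ∈ 𝒜(x,y)` and `g ∈ 𝒜(z,w)`,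
`f · g := f ∘ g` if the morphisms are composable (`w = x`) and `0` otherwise. -/
noncomputable def c0Mul (a b : 𝒜.C0) : 𝒜.C0 :=
  DFinsupp.sum a fun p f => DFinsupp.sum b fun q g =>
    if h : q.2 = p.1 then DFinsupp.single (q.1, p.2) (𝒜.comp f (h ▸ g)) else 0

open scoped Classical in
/-- The involution of the *-algebra `C*₀𝒜`, inherited from `𝒜`. -/
noncomputable def c0Star (a : 𝒜.C0) : 𝒜.C0 :=
  DFinsupp.sum a fun p f => DFinsupp.single (p.2, p.1) (𝒜.star f)

open scoped Classical in
/-- The inclusion of the morphism set `𝒜(x,y)` into `C*₀𝒜`. -/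
noncomputable def ofHom (x y : 𝒜.Obj) (f : 𝒜.Hom x y) : 𝒜.C0 :=
  DFinsupp.single (x, y) f

/-- A C*-seminorm on the *-algebra `C*₀𝒜`: a submultiplicative seminorm `ρ` with
`ρ(a* a) = ρ(a)²`. -/
structure IsCStarSeminorm (ρ : 𝒜.C0 → ℝ) : Prop where
  nonneg : ∀ a, 0 ≤ ρ a
  add_le : ∀ a b, ρ (a + b) ≤ ρ a + ρ b
  smul_eq : ∀ (c : ℂ) (a), ρ (c • a) = ‖c‖ * ρ a
  mul_le : ∀ a b, ρ (𝒜.c0Mul a b) ≤ ρ a * ρ b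
  cstar : ∀ a, ρ (𝒜.c0Mul (𝒜.c0Star a) a) = ρ a ^ 2

end CStarCategory

section CStarAlgebra

theorem exists_unitary_eq_smul_add_star {A : Type*} [CStarAlgebra A] {a : A}
    (ha : IsSelfAdjoint a) :
    ∃ u ∈ unitary A, a = ((‖a‖ / 2 : ℝ) : ℂ) • (u + star u) := by
  let _ := CStarAlgebra.spectralOrder A
  have := CStarAlgebra.spectralOrderedRing A
  rcases eq_or_ne a 0 with rfl | ha₀
  · exact ⟨1, one_mem _, by simp⟩
  let b : selfAdjoint A := ‖a‖⁻¹ • ⟨a, ha⟩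
  have hb : ‖b‖ ≤ 1 := by simp [b, norm_smul, ha₀]
  let u := selfAdjoint.unitarySelfAddISMul b hb
  have hu : (u : A) + star (u : A) = (2 : ℝ) • (b : A) := by
    rw [← selfAdjoint.realPart_unitarySelfAddISMul b hb, realPart_apply_coe,
      smul_inv_smul₀ two_ne_zero]
  refine ⟨u, u.2, ?_⟩
  rw [hu, Complex.coe_smul, smul_smul, div_mul_cancel₀ _ two_ne_zero]
  simp [b, ha₀]

theorem exists_inr_eq_mul_inr {R A : Type*} [MulZeroClass R] [NonUnitalNonAssocSemiring A]
    [SMulWithZero R A] (w : Unitization R A) (b : A) :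
    ∃ c : A, (c : Unitization R A) = w * b :=
  ⟨w.fst • b + w.snd * b, by ext <;> simp⟩

theorem cstarSeminorm_eq_of_star_mul_self_eq {𝕜 A : Type*} [SeminormedRing 𝕜] [AddGroup A] [Mul A]
    [Star A] [SMul 𝕜 A] {p : Seminorm 𝕜 A} (hp : ∀ a, p (star a * a) = p a ^ 2) {a b : A}
    (h : star a * a = star b * b) : p a = p b := by
  rw [← sq_eq_sq₀ (apply_nonneg p a) (apply_nonneg p b), ← hp, ← hp, h]

theorem cstarSeminorm_eq_of_inr_eq_unitary_mul {𝕜 A : Type*} [SeminormedCommRing 𝕜] [StarRing 𝕜]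
    [NonUnitalRing A] [StarRing A] [Module 𝕜 A] [IsScalarTower 𝕜 A A] [SMulCommClass 𝕜 A A]
    [StarModule 𝕜 A] {p : Seminorm 𝕜 A} (hp : ∀ a, p (star a * a) = p a ^ 2)
    {u : Unitization 𝕜 A} (hu : u ∈ unitary (Unitization 𝕜 A)) {a b : A}
    (h : (a : Unitization 𝕜 A) = u * b) : p a = p b := by
  refine cstarSeminorm_eq_of_star_mul_self_eq hp (Unitization.inr_injective (R := 𝕜) ?_)
  calc ((star a * a : A) : Unitization 𝕜 A) = star (u * (b : Unitization 𝕜 A)) * (u * b) := by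
        rw [Unitization.inr_mul, Unitization.inr_star, h]
    _ = star (b : Unitization 𝕜 A) * (star u * u) * b := by simp only [star_mul, mul_assoc]
    _ = (star b * b : A) := by
        rw [Unitary.star_mul_self_of_mem hu, mul_one, Unitization.inr_mul, Unitization.inr_star]

variable {A : Type*} [NonUnitalCStarAlgebra A] {p : Seminorm ℂ A}

theorem cstarSeminorm_selfAdjoint_mul_le (hp : ∀ a, p (star a * a) = p a ^ 2) {h : A}
    (hh : IsSelfAdjoint h) (b : A) : p (h * b) ≤ ‖h‖ * p b := by
  obtain ⟨u, hu, hhu⟩ := exists_unitary_eq_smul_add_star (hh.inr ℂ)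
  obtain ⟨c, hc⟩ := exists_inr_eq_mul_inr u b
  obtain ⟨d, hd⟩ := exists_inr_eq_mul_inr (star u) b
  have hpc : p c = p b := cstarSeminorm_eq_of_inr_eq_unitary_mul hp hu hc
  have hpd : p d = p b := cstarSeminorm_eq_of_inr_eq_unitary_mul hp (Unitary.star_mem hu) hd
  have hhb : h * b = ((‖h‖ / 2 : ℝ) : ℂ) • (c + d) := by
    apply Unitization.inr_injective (R := ℂ)
    rw [Unitization.inr_mul, hhu, Unitization.norm_inr, smul_mul_assoc, add_mul, ← hc, ← hd,
      Unitization.inr_smul, Unitization.inr_add]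
  calc p (h * b) = ‖h‖ / 2 * p (c + d) := by
        rw [hhb, map_smul_eq_mul, Complex.norm_of_nonneg (by positivity)]
    _ ≤ ‖h‖ / 2 * (p c + p d) := by gcongr; exact map_add_le_add p c d
    _ = ‖h‖ * p b := by rw [hpc, hpd]; ring

theorem cstarSeminorm_le_norm_of_isSelfAdjoint (hp : ∀ a, p (star a * a) = p a ^ 2) {h : A}
    (hh : IsSelfAdjoint h) : p h ≤ ‖h‖ := by
  have hsq : p h * p h ≤ ‖h‖ * p h := by
    simpa only [← sq, ← hp, hh.star_eq] using cstarSeminorm_selfAdjoint_mul_le hp hh h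
  rcases (apply_nonneg p h).eq_or_lt with h₀ | hpos
  · exact h₀ ▸ norm_nonneg h
  · exact le_of_mul_le_mul_right hsq hpos

theorem cstarSeminorm_le_norm (hp : ∀ a, p (star a * a) = p a ^ 2) (a : A) : p a ≤ ‖a‖ := by
  refine le_of_sq_le_sq ?_ (norm_nonneg a)
  calc p a ^ 2 = p (star a * a) := (hp a).symm
    _ ≤ ‖star a * a‖ := cstarSeminorm_le_norm_of_isSelfAdjoint hp (.star_mul_self a)
    _ = ‖a‖ ^ 2 := by rw [CStarRing.norm_star_mul_self, sq]

end CStarAlgebra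

namespace CStarCategory

section Hom

variable (𝒜 : CStarCategory) {x y z : 𝒜.Obj}

theorem comp_zero (g : 𝒜.Hom y z) : 𝒜.comp g (0 : 𝒜.Hom x y) = 0 := by
  simpa only [zero_smul] using 𝒜.comp_smul 0 g (0 : 𝒜.Hom x y)

theorem zero_comp (f : 𝒜.Hom x y) : 𝒜.comp (0 : 𝒜.Hom y z) f = 0 := by
  simpa only [zero_smul] using 𝒜.smul_comp 0 (0 : 𝒜.Hom y z) f

theorem star_zero : 𝒜.star (0 : 𝒜.Hom x y) = 0 := by
  simpa only [map_zero, zero_smul] using 𝒜.star_smul 0 (0 : 𝒜.Hom x y)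

/-- The C*-algebra `𝒜(x,x)` of endomorphisms of `x`, with composition as product. It is
no global instance, as it would compete with `CStarCategory.nacg` for the norm on `𝒜(x,x)`. -/
noncomputable abbrev endCStarAlgebra (x : 𝒜.Obj) : NonUnitalCStarAlgebra (𝒜.Hom x x) where
  __ := 𝒜.nacg x x
  __ := 𝒜.nsp x x
  __ := 𝒜.complete x x
  mul f g := 𝒜.comp f g
  star f := 𝒜.star f
  left_distrib := 𝒜.comp_add
  right_distrib := 𝒜.add_comp
  zero_mul := 𝒜.zero_comp
  mul_zero := 𝒜.comp_zero
  mul_assoc := 𝒜.comp_assoc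
  norm_mul_le := 𝒜.norm_comp_le
  star_involutive := 𝒜.star_star
  star_mul := 𝒜.star_comp
  star_add := 𝒜.star_add
  norm_mul_self_le f := (sq ‖f‖).symm.trans_le (𝒜.norm_star_comp_self f).ge
  smul_assoc := 𝒜.smul_comp
  smul_comm c f g := (𝒜.comp_smul c f g).symm
  star_smul := 𝒜.star_smul

theorem c0Star_ofHom (f : 𝒜.Hom x y) : 𝒜.c0Star (𝒜.ofHom x y f) = 𝒜.ofHom y x (𝒜.star f) := by
  classical
  exact DFinsupp.sum_single_index (by simp [star_zero])

theorem c0Mul_ofHom (g : 𝒜.Hom y z) (f : 𝒜.Hom x y) :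
    𝒜.c0Mul (𝒜.ofHom y z g) (𝒜.ofHom x y f) = 𝒜.ofHom x z (𝒜.comp g f) := by
  classical
  unfold c0Mul ofHom
  rw [DFinsupp.sum_single_index, DFinsupp.sum_single_index]
  · simp
  · simp [comp_zero]
  · simp [DFinsupp.sum, zero_comp]

end Hom

section Seminorm

variable {𝒜 : CStarCategory}

open scoped Classical in
theorem seminorm_le_sum_ofHom (p : Seminorm ℂ 𝒜.C0) (a : 𝒜.C0) :
    p a ≤ ∑ i ∈ a.support, p (𝒜.ofHom i.1 i.2 (a i)) := by
  have ha : ∑ i ∈ a.support, 𝒜.ofHom i.1 i.2 (a i) = a := DFinsupp.sum_single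
  calc p a = p (∑ i ∈ a.support, 𝒜.ofHom i.1 i.2 (a i)) := by rw [ha]
    _ ≤ _ := Finset.le_sum_of_subadditive p (map_zero p).le (map_add_le_add p) _ _

variable {p : Seminorm ℂ 𝒜.C0}

theorem cstarSeminorm_eq_sqrt (hp : ∀ a, p (𝒜.c0Mul (𝒜.c0Star a) a) = p a ^ 2) (a : 𝒜.C0) :
    p a = √(p (𝒜.c0Mul (𝒜.c0Star a) a)) := by
  rw [hp, Real.sqrt_sq (apply_nonneg p a)]

theorem cstarSeminorm_ofHom_end_le (hp : ∀ a, p (𝒜.c0Mul (𝒜.c0Star a) a) = p a ^ 2) {x : 𝒜.Obj}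
    (f : 𝒜.Hom x x) : p (𝒜.ofHom x x f) ≤ ‖f‖ := by
  classical
  let _ := 𝒜.endCStarAlgebra x
  let ι : 𝒜.Hom x x →ₗ[ℂ] 𝒜.C0 :=
    DFinsupp.lsingle (M := fun i : 𝒜.Obj × 𝒜.Obj ↦ 𝒜.Hom i.1 i.2) (x, x)
  refine cstarSeminorm_le_norm (p := p.comp ι) (fun g ↦ ?_) f
  change p (𝒜.ofHom x x (𝒜.comp (𝒜.star g) g)) = p (𝒜.ofHom x x g) ^ 2
  rw [← hp, c0Star_ofHom, c0Mul_ofHom]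

theorem cstarSeminorm_ofHom_le (hp : ∀ a, p (𝒜.c0Mul (𝒜.c0Star a) a) = p a ^ 2) {x y : 𝒜.Obj}
    (f : 𝒜.Hom x y) : p (𝒜.ofHom x y f) ≤ √‖𝒜.comp (𝒜.star f) f‖ := by
  rw [cstarSeminorm_eq_sqrt hp, c0Star_ofHom, c0Mul_ofHom]
  exact Real.sqrt_le_sqrt (cstarSeminorm_ofHom_end_le hp _)

open scoped Classical in
theorem cstarSeminorm_le_sum_sqrt (hp : ∀ a, p (𝒜.c0Mul (𝒜.c0Star a) a) = p a ^ 2) (a : 𝒜.C0) :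
    p a ≤ ∑ i ∈ a.support, √‖𝒜.comp (𝒜.star (a i)) (a i)‖ :=
  (seminorm_le_sum_ofHom p a).trans (Finset.sum_le_sum fun i _ ↦ cstarSeminorm_ofHom_le hp (a i))

end Seminorm

/-- The seminorm underlying a C*-seminorm on `C*₀𝒜`, bundled so that Mathlib's results on seminorms
apply to it. -/
noncomputable def IsCStarSeminorm.toSeminorm {𝒜 : CStarCategory} {ρ : 𝒜.C0 → ℝ}
    (hρ : 𝒜.IsCStarSeminorm ρ) : Seminorm ℂ 𝒜.C0 :=
  .of ρ hρ.add_le hρ.smul_eq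

open scoped Classical in
theorem cstarSeminorm_le_general (𝒜 : CStarCategory) (p : Seminorm ℂ 𝒜.C0)
    (hp : ∀ a, p (𝒜.c0Mul (𝒜.c0Star a) a) = p a ^ 2) (a : 𝒜.C0) :
    (p a ≤ ∑ i ∈ a.support, p (𝒜.ofHom i.1 i.2 (a i))) ∧
    (∀ i : 𝒜.Obj × 𝒜.Obj, p (𝒜.ofHom i.1 i.2 (a i))
      = √(p (𝒜.c0Mul (𝒜.c0Star (𝒜.ofHom i.1 i.2 (a i))) (𝒜.ofHom i.1 i.2 (a i))))) ∧
    (p a ≤ ∑ i ∈ a.support, √‖𝒜.comp (𝒜.star (a i)) (a i)‖) ∧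
    BddAbove {r : ℝ | ∃ q : Seminorm ℂ 𝒜.C0,
      (∀ b, q (𝒜.c0Mul (𝒜.c0Star b) b) = q b ^ 2) ∧ r = q a} := by
  refine ⟨seminorm_le_sum_ofHom p a, fun i ↦ cstarSeminorm_eq_sqrt hp _,
    cstarSeminorm_le_sum_sqrt hp a, ⟨∑ i ∈ a.support, √‖𝒜.comp (𝒜.star (a i)) (a i)‖, ?_⟩⟩
  rintro _ ⟨q, hq, rfl⟩
  exact cstarSeminorm_le_sum_sqrt hq a

end CStarCategory

open scoped Classical in
/-- Let `𝒜` be a C*-category.  Then the supremum of all C*-seminorms on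
the *-algebra `C*₀𝒜` is finite: for every C*-seminorm `ρ` on `C*₀𝒜` and every element
`a = Σ_{x,y} a_{xy}` with `a_{xy} ∈ 𝒜(x,y)`, one has
`ρ(a) ≤ Σ_{x,y} ρ(a_{xy}) = Σ_{x,y} ρ(a_{xy}* a_{xy})^{1/2} ≤ Σ_{x,y} ‖a_{xy}* a_{xy}‖^{1/2}`
(the last inequality because each C*-algebra `𝒜(x,x)` has a unique C*-norm).  Hence the
enveloping C*-algebra `C*𝒜` is well defined: each set `{ρ(a) | ρ a C*-seminorm}` is
bounded above. -/
theorem CStarCategory.cstarSeminorm_le (𝒜 : CStarCategory) (ρ : 𝒜.C0 → ℝ)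
    (hρ : 𝒜.IsCStarSeminorm ρ) (a : 𝒜.C0) :
    (ρ a ≤ ∑ p ∈ a.support, ρ (𝒜.ofHom p.1 p.2 (a p))) ∧
    (∀ p : 𝒜.Obj × 𝒜.Obj, ρ (𝒜.ofHom p.1 p.2 (a p))
      = Real.sqrt (ρ (𝒜.c0Mul (𝒜.c0Star (𝒜.ofHom p.1 p.2 (a p))) (𝒜.ofHom p.1 p.2 (a p))))) ∧
    (ρ a ≤ ∑ p ∈ a.support, Real.sqrt ‖𝒜.comp (𝒜.star (a p)) (a p)‖) ∧
    BddAbove {r : ℝ | ∃ ρ' : 𝒜.C0 → ℝ, 𝒜.IsCStarSeminorm ρ' ∧ r = ρ' a} := by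
  obtain ⟨h_sum, h_sqrt, h_norm, h_bdd⟩ := 𝒜.cstarSeminorm_le_general hρ.toSeminorm hρ.cstar a
  refine ⟨h_sum, h_sqrt, h_norm, h_bdd.mono ?_⟩
  exact fun _ ⟨_, h, hr⟩ ↦ ⟨h.toSeminorm, h.cstar, hr⟩
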